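/- Let u be a C⁴-smooth strictly octonionic plurisubharmonic function on an open subset of ℝ¹⁶ ≅ 𝕆², and let z be a point at which the octonionic Hessian of u is diagonal, i.e. u_{1̄2}(z) = 0. Then Σ_{p=0}^{7} Σ_{i,k=1}^{2} |∂u_{k̄k}/∂x_i^p (z)|² / (u_{īi}(z)·u_{k̄k}(z)) ≤ 4·Σ_{p=0}^{7} Σ_{i,k,l=1}^{2} |∂u_{k̄i}/∂x_l^p (z)|² / (u_{īi}(z)·u_{k̄k}(z)), where |·| denotes the octonionic norm and u_{1̄1}(z), u_{2̄2}(z) > 0. (Proposition 13.1, the elementary inequality.) -/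

import Mathlib

noncomputable section

open scoped Quaternion

/-- The octonions, realized as pairs of quaternions (Cayley–Dickson). -/
abbrev Oct : Type := ℍ[ℝ] × ℍ[ℝ]

/-- Octonionic multiplication: (x,y)·(w,z) = (xw − z̄y, zx + yw̄). -/
def omul (a b : Oct) : Oct :=
  (a.1 * b.1 - star b.2 * a.2, b.2 * a.1 + a.2 * star b.1)

/-- Octonionic conjugation. -/
def oconj (a : Oct) : Oct := (star a.1, -a.2)

/-- Real part of an octonion. -/
def oRe (a : Oct) : ℝ := a.1.re

/-- Squared norm |q|² = Re(q·q̄). -/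
def onSq (a : Oct) : ℝ := oRe (omul a (oconj a))

/-- Octonionic Hermitian 2×2 matrix: (α, β, q) represents [[α, q],[q̄, β]]. -/
abbrev Herm : Type := ℝ × ℝ × Oct

/-- Determinant of an octonionic Hermitian 2×2 matrix. -/
def detH (A : Herm) : ℝ := A.1 * A.2.1 - onSq A.2.2

/-- The quadratic form ξ ↦ Re(ξ*Aξ). -/
def qform (A : Herm) (ξ : Oct × Oct) : ℝ :=
  A.1 * onSq ξ.1 + A.2.1 * onSq ξ.2 + 2 * oRe (omul (oconj ξ.1) (omul A.2.2 ξ.2))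

/-- Positive definiteness. -/
def PosDefH (A : Herm) : Prop := ∀ ξ : Oct × Oct, ξ ≠ 0 → 0 < qform A ξ

/-- Nonnegative definiteness. -/
def NonnegDefH (A : Herm) : Prop := ∀ ξ : Oct × Oct, 0 ≤ qform A ξ

/-- The point space ℝ¹⁶, with coordinates x_i^p, i = 1,2 and p = 0,…,7. -/
abbrev Pt : Type := Fin 2 → Fin 8 → ℝ

def qI : ℍ[ℝ] := ⟨0, 1, 0, 0⟩
def qJ : ℍ[ℝ] := ⟨0, 0, 1, 0⟩
def qK : ℍ[ℝ] := ⟨0, 0, 0, 1⟩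

/-- The standard real basis e₀ = 1, e₁, …, e₇ of the octonions. -/
def e : Fin 8 → Oct :=
  ![((1 : ℍ[ℝ]), 0), (qI, 0), (qJ, 0), (qK, 0),
    (0, (1 : ℍ[ℝ])), (0, qI), (0, qJ), (0, qK)]

/-- The coordinate unit vector of the coordinate x_i^p. -/
def uvec (i : Fin 2) (p : Fin 8) : Pt := Pi.single i (Pi.single p 1)

/-- Partial derivative ∂f/∂x_i^p of a real-valued function on ℝ¹⁶. -/
def pd (i : Fin 2) (p : Fin 8) (f : Pt → ℝ) : Pt → ℝ :=
  fun x => fderiv ℝ f x (uvec i p)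

/-- The entry f_{ī j} = Σ_{p,q} e_p·(∂²f/∂x_i^p∂x_j^q)·conj(e_q) of the octonionic Hessian. -/
def hessEntry (f : Pt → ℝ) (i j : Fin 2) (x : Pt) : Oct :=
  ∑ p, ∑ q, pd i p (pd j q f) x • omul (e p) (oconj (e q))

/-- The Laplacian Δᵢ = Σ_p ∂²/∂(x_i^p)² in the i-th octonionic variable. -/
def lap (i : Fin 2) (f : Pt → ℝ) (x : Pt) : ℝ := ∑ p, pd i p (pd i p f) x

/-- The identification ℝ¹⁶ ≅ 𝕆². -/
def toO2 (x : Pt) : Oct × Oct := (∑ p, x 0 p • e p, ∑ p, x 1 p • e p)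

/-! Helper lemmas. -/

theorem onSq_eq (a : Oct) : onSq a = a.1.re ^ 2 + a.1.imI ^ 2 + a.1.imJ ^ 2 + a.1.imK ^ 2
    + (a.2.re ^ 2 + a.2.imI ^ 2 + a.2.imJ ^ 2 + a.2.imK ^ 2) := by
  simp [onSq, oRe, omul, oconj]
  ring

theorem onSq_nonneg (a : Oct) : 0 ≤ onSq a := by
  rw [onSq_eq]; positivity

theorem onSq_oconj (a : Oct) : onSq (oconj a) = onSq a := by
  simp [onSq_eq, oconj]

set_option maxHeartbeats 4000000 in
theorem onSq_omul (a b : Oct) : onSq (omul a b) = onSq a * onSq b := by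
  simp only [onSq_eq]
  simp [omul]
  ring

set_option maxHeartbeats 4000000 in
theorem omul_oconj_polar (x a b : Oct) :
    omul (omul x (oconj a)) b + omul (omul x (oconj b)) a
      = (2 * oRe (omul a (oconj b))) • x := by
  ext <;> simp [omul, oconj, oRe] <;> ring

/-- Multiplication as a bilinear map. -/
def omulL : Oct →ₗ[ℝ] Oct →ₗ[ℝ] Oct :=
  LinearMap.mk₂ ℝ omul
    (by intros; ext <;> simp [omul] <;> ring)
    (by intros; ext <;> simp [omul] <;> ring)
    (by intros; ext <;> simp [omul] <;> ring)
    (by intros; ext <;> simp [omul] <;> ring)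

theorem omulL_apply (a b : Oct) : omulL a b = omul a b := rfl

/-- Conjugation as a linear map. -/
def oconjL : Oct →ₗ[ℝ] Oct where
  toFun := oconj
  map_add' := by intros; ext <;> simp [oconj, add_comm]
  map_smul' := by intros; ext <;> simp [oconj]

theorem oconjL_apply (a : Oct) : oconjL a = oconj a := rfl

theorem oconj_omul (a b : Oct) : oconj (omul a (oconj b)) = omul b (oconj a) := by
  ext <;> simp [omul, oconj] <;> ring

theorem omul_oconj_add (a b : Oct) : omul a (oconj b) + omul b (oconj a)
    = (2 * oRe (omul a (oconj b))) • ((1, 0) : Oct) := by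
  ext <;> simp [omul, oconj, oRe] <;> ring

theorem qI_re : qI.re = 0 := rfl
theorem qI_imI : qI.imI = 1 := rfl
theorem qI_imJ : qI.imJ = 0 := rfl
theorem qI_imK : qI.imK = 0 := rfl
theorem qJ_re : qJ.re = 0 := rfl
theorem qJ_imI : qJ.imI = 0 := rfl
theorem qJ_imJ : qJ.imJ = 1 := rfl
theorem qJ_imK : qJ.imK = 0 := rfl
theorem qK_re : qK.re = 0 := rfl
theorem qK_imI : qK.imI = 0 := rfl
theorem qK_imJ : qK.imJ = 0 := rfl
theorem qK_imK : qK.imK = 1 := rfl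

theorem e_orth (p q : Fin 8) : oRe (omul (e p) (oconj (e q))) = if p = q then 1 else 0 := by
  fin_cases p <;> fin_cases q <;> 
    simp [e, omul, oconj, oRe, qI_re, qI_imI, qI_imJ, qI_imK, qJ_re, qJ_imI, qJ_imJ, qJ_imK, qK_re, qK_imI, qK_imJ, qK_imK]

theorem onSq_e (p : Fin 8) : onSq (e p) = 1 := by
  have := e_orth p p
  simpa [onSq] using this

theorem onSq_comb (c : Fin 8 → ℝ) : onSq (∑ p, c p • e p) = ∑ p, c p ^ 2 := by
  rw [onSq_eq]
  simp [Fin.sum_univ_eight, e, qI_re, qI_imI, qI_imJ, qI_imK, qJ_re, qJ_imI, qJ_imJ, qJ_imK, qK_re, qK_imI, qK_imJ, qK_imK]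
  try ring

theorem onSq_sum_le (v : Fin 8 → Oct) : onSq (∑ r, v r) ≤ 8 * ∑ r, onSq (v r) := by
  have key : ∀ f : Oct →ₗ[ℝ] ℝ, (f (∑ r, v r)) ^ 2 ≤ 8 * ∑ r, (f (v r)) ^ 2 := by
    intro f
    rw [map_sum]
    simpa using sq_sum_le_card_mul_sum_sq (s := (Finset.univ : Finset (Fin 8)))
      (f := fun r => f (v r))
  have h1 : (∑ r, v r).1.re ^ 2 ≤ 8 * ∑ r, (v r).1.re ^ 2 := key ⟨⟨fun a => a.1.re, by intros; simp⟩, by intros; simp⟩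
  have h2 : (∑ r, v r).1.imI ^ 2 ≤ 8 * ∑ r, (v r).1.imI ^ 2 := key ⟨⟨fun a => a.1.imI, by intros; simp⟩, by intros; simp⟩
  have h3 : (∑ r, v r).1.imJ ^ 2 ≤ 8 * ∑ r, (v r).1.imJ ^ 2 := key ⟨⟨fun a => a.1.imJ, by intros; simp⟩, by intros; simp⟩
  have h4 : (∑ r, v r).1.imK ^ 2 ≤ 8 * ∑ r, (v r).1.imK ^ 2 := key ⟨⟨fun a => a.1.imK, by intros; simp⟩, by intros; simp⟩
  have h5 : (∑ r, v r).2.re ^ 2 ≤ 8 * ∑ r, (v r).2.re ^ 2 := key ⟨⟨fun a => a.2.re, by intros; simp⟩, by intros; simp⟩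
  have h6 : (∑ r, v r).2.imI ^ 2 ≤ 8 * ∑ r, (v r).2.imI ^ 2 := key ⟨⟨fun a => a.2.imI, by intros; simp⟩, by intros; simp⟩
  have h7 : (∑ r, v r).2.imJ ^ 2 ≤ 8 * ∑ r, (v r).2.imJ ^ 2 := key ⟨⟨fun a => a.2.imJ, by intros; simp⟩, by intros; simp⟩
  have h8 : (∑ r, v r).2.imK ^ 2 ≤ 8 * ∑ r, (v r).2.imK ^ 2 := key ⟨⟨fun a => a.2.imK, by intros; simp⟩, by intros; simp⟩
  simp only [onSq_eq, Finset.sum_add_distrib]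
  linarith

/-- Half-sum symmetrization. -/
theorem sum_symm_aux (s : Fin 8 → Fin 8 → ℝ) (hs : ∀ q r, s q r = s r q)
    (w : Fin 8 → Fin 8 → Oct) (x : Oct)
    (hw : ∀ q r, w q r + w r q = (2 * (if q = r then 1 else 0 : ℝ)) • x) :
    ∑ q, ∑ r, s q r • w q r = (∑ q, s q q) • x := by
  have h1 : ∑ q, ∑ r, s q r • w q r = ∑ q, ∑ r, s q r • w r q := by
    rw [Finset.sum_comm]
    refine Finset.sum_congr rfl fun q _ => Finset.sum_congr rfl fun r _ => ?_
    rw [hs]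
  have h2 : (2 : ℝ) • ∑ q, ∑ r, s q r • w q r = (2 : ℝ) • ((∑ q, s q q) • x) := by
    rw [two_smul]
    nth_rewrite 2 [h1]
    rw [← Finset.sum_add_distrib]
    simp only [← Finset.sum_add_distrib, ← smul_add, hw]
    rw [Finset.sum_smul, Finset.smul_sum]
    refine Finset.sum_congr rfl fun q _ => ?_
    rw [Finset.sum_eq_single q]
    · simp [smul_smul, mul_comm]
    · intro r _ hr
      simp [Ne.symm hr]
    · simp
  exact smul_right_injective Oct (two_ne_zero) h2

theorem diag_aux (s : Fin 8 → Fin 8 → ℝ) (hs : ∀ q r, s q r = s r q) :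
    onSq (∑ p, ∑ q, s p q • omul (e p) (oconj (e q))) = (∑ p, s p p) ^ 2 := by
  rw [sum_symm_aux s hs (fun p q => omul (e p) (oconj (e q))) (1, 0)]
  · simp [onSq_eq]
  · intro q r
    rw [omul_oconj_add, e_orth]

theorem off_aux (t : Fin 8 → Fin 8 → Fin 8 → ℝ) (ht : ∀ p q r, t p q r = t p r q) :
    ∑ p, (∑ q, t p q q) ^ 2
      ≤ 8 * ∑ r, onSq (∑ p, ∑ q, t p q r • omul (e p) (oconj (e q))) := by
  have h : ∑ r, omul (∑ p, ∑ q, t p q r • omul (e p) (oconj (e q))) (e r)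
      = ∑ p, (∑ q, t p q q) • e p := by
    simp only [← omulL_apply, map_sum, map_smul, LinearMap.sum_apply, LinearMap.smul_apply]
    rw [Finset.sum_comm]
    refine Finset.sum_congr rfl fun p _ => ?_
    rw [Finset.sum_comm]
    refine sum_symm_aux (t p) (ht p)
      (fun q r => omulL (omulL (e p) (oconj (e q))) (e r)) (e p) fun q r => ?_
    simp only [omulL_apply]
    rw [omul_oconj_polar, e_orth]
  rw [← onSq_comb, ← h]
  refine (onSq_sum_le _).trans_eq ?_
  simp [onSq_omul, onSq_e]

theorem conj_aux (s : Fin 8 → Fin 8 → ℝ) :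
    onSq (∑ p, ∑ q, s p q • omul (e p) (oconj (e q)))
      = onSq (∑ p, ∑ q, s q p • omul (e p) (oconj (e q))) := by
  rw [← onSq_oconj]
  simp only [← oconjL_apply, map_sum, map_smul]
  simp only [oconjL_apply, oconj_omul]
  rw [Finset.sum_comm]

theorem pd_contDiffAt {n m : ℕ} (hnm : m + 1 ≤ n) (i : Fin 2) (p : Fin 8) {f : Pt → ℝ} {x : Pt}
    (hf : ContDiffAt ℝ n f x) : ContDiffAt ℝ m (pd i p f) x := by
  have : ContDiffAt ℝ m (fderiv ℝ f) x := hf.fderiv_right (by exact_mod_cast hnm)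
  exact this.clm_apply contDiffAt_const

theorem pd_comm {n : ℕ} (hn : 2 ≤ n) (i j : Fin 2) (p q : Fin 8) {f : Pt → ℝ} {x : Pt}
    (hf : ContDiffAt ℝ n f x) : pd i p (pd j q f) x = pd j q (pd i p f) x := by
  have hd : DifferentiableAt ℝ (fderiv ℝ f) x := by
    have : ContDiffAt ℝ 1 (fderiv ℝ f) x := hf.fderiv_right (by exact_mod_cast hn)
    exact this.differentiableAt (by simp)
  have hs : IsSymmSndFDerivAt ℝ f x := hf.isSymmSndFDerivAt (by simpa using hn)
  have key : ∀ (a b : Pt), fderiv ℝ (fun y => fderiv ℝ f y b) x a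
      = fderiv ℝ (fderiv ℝ f) x a b := by
    intro a b
    rw [fderiv_clm_apply hd (by fun_prop)]
    simp
  unfold pd
  rw [key, key]
  exact hs _ _

theorem fderiv_hess {f : Pt → ℝ} {x : Pt} (hf : ContDiffAt ℝ 4 f x) (i j l : Fin 2) (r : Fin 8) :
    fderiv ℝ (hessEntry f i j) x (uvec l r)
      = ∑ p, ∑ q, pd l r (pd i p (pd j q f)) x • omul (e p) (oconj (e q)) := by
  have hd : ∀ p q, DifferentiableAt ℝ (pd i p (pd j q f)) x := by
    intro p q
    have h3 : ContDiffAt ℝ (3 : ℕ) (pd j q f) x := pd_contDiffAt (n := 4) (by norm_num) j q hf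
    have h2 : ContDiffAt ℝ (2 : ℕ) (pd i p (pd j q f)) x :=
      pd_contDiffAt (by norm_num) i p h3
    exact h2.differentiableAt (by simp)
  have hD : HasFDerivAt (hessEntry f i j)
      (∑ p, ∑ q, (fderiv ℝ (pd i p (pd j q f)) x).smulRight (omul (e p) (oconj (e q)))) x := by
    unfold hessEntry
    refine HasFDerivAt.fun_sum fun p _ => HasFDerivAt.fun_sum fun q _ => ?_
    exact (hd p q).hasFDerivAt.smul_const _
  rw [hD.fderiv]
  simp [pd]

/-- Proposition 13.1 (the elementary inequality): if u is C⁴ and strictly octonionic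
plurisubharmonic on an open set U, and its octonionic Hessian is diagonal at z ∈ U
(i.e. u_{1̄2}(z) = 0), then
Σ_{p,i,k} |∂u_{k̄k}/∂x_i^p|²/(u_{īi}u_{k̄k}) ≤ 4·Σ_{p,i,k,l} |∂u_{k̄i}/∂x_l^p|²/(u_{īi}u_{k̄k})
at the point z. -/
theorem elementary_inequality (U : Set Pt) (hU : IsOpen U) (u : Pt → ℝ)
    (hu : ContDiffOn ℝ 4 u U)
    (hpsh : ∀ x ∈ U, 0 < oRe (hessEntry u 0 0 x) ∧
        0 < oRe (hessEntry u 0 0 x) * oRe (hessEntry u 1 1 x)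
              - onSq (hessEntry u 0 1 x))
    (z : Pt) (hz : z ∈ U) (hdiag : hessEntry u 0 1 z = 0) :
    ∑ p : Fin 8, ∑ i : Fin 2, ∑ k : Fin 2,
        onSq (fderiv ℝ (hessEntry u k k) z (uvec i p))
          / (oRe (hessEntry u i i z) * oRe (hessEntry u k k z))
      ≤ 4 * ∑ p : Fin 8, ∑ i : Fin 2, ∑ k : Fin 2, ∑ l : Fin 2,
          onSq (fderiv ℝ (hessEntry u k i) z (uvec l p))
            / (oRe (hessEntry u i i z) * oRe (hessEntry u k k z)) := by

  have hc : ContDiffAt ℝ 4 u z := hu.contDiffAt (hU.mem_nhds hz)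
  obtain ⟨ha, hb⟩ := hpsh z hz
  have hb' : 0 < oRe (hessEntry u 1 1 z) := by
    have h0 : onSq (hessEntry u 0 1 z) = 0 := by rw [hdiag]; simp [onSq_eq]
    rw [h0, sub_zero] at hb
    exact (mul_pos_iff_of_pos_left ha).1 hb
  -- symmetries of the third derivatives
  have h12 : ∀ (l i j : Fin 2) (r p q : Fin 8),
      pd l r (pd i p (pd j q u)) z = pd i p (pd l r (pd j q u)) z := by
    intro l i j r p q
    have h3 : ContDiffAt ℝ (3 : ℕ) (pd j q u) z := pd_contDiffAt (n := 4) (by norm_num) j q hc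
    exact pd_comm (by norm_num) l i r p h3
  have h23 : ∀ (l i j : Fin 2) (r p q : Fin 8),
      pd l r (pd i p (pd j q u)) z = pd l r (pd j q (pd i p u)) z := by
    intro l i j r p q
    have he : pd i p (pd j q u) =ᶠ[nhds z] pd j q (pd i p u) := by
      filter_upwards [hU.mem_nhds hz] with y hy
      exact pd_comm (n := 4) (by norm_num) i j p q (hu.contDiffAt (hU.mem_nhds hy))
    change fderiv ℝ _ z _ = fderiv ℝ _ z _
    rw [he.fderiv_eq]
  -- the mixed estimate
  have hoff : ∀ i k : Fin 2, ∑ p, onSq (fderiv ℝ (hessEntry u k k) z (uvec i p))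
      ≤ 8 * ∑ r, onSq (fderiv ℝ (hessEntry u i k) z (uvec k r)) := by
    intro i k
    have h := off_aux (fun p q r => pd i p (pd k r (pd k q u)) z)
      (fun p q r => h23 _ _ _ _ _ _)
    simp only [fderiv_hess hc]
    refine le_trans (le_of_eq ?_) (h.trans_eq ?_)
    · refine Finset.sum_congr rfl fun p _ => ?_
      rw [diag_aux _ (fun q r => h23 _ _ _ _ _ _)]
    · congr 1
      refine Finset.sum_congr rfl fun r _ => ?_
      congr 1
      refine Finset.sum_congr rfl fun p _ => Finset.sum_congr rfl fun q _ => ?_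
      rw [h12]
  have hconj : ∀ (l : Fin 2) (r : Fin 8), onSq (fderiv ℝ (hessEntry u 1 0) z (uvec l r))
      = onSq (fderiv ℝ (hessEntry u 0 1) z (uvec l r)) := by
    intro l r
    rw [fderiv_hess hc, fderiv_hess hc, conj_aux]
    congr 1
    refine Finset.sum_congr rfl fun p _ => Finset.sum_congr rfl fun q _ => ?_
    rw [h23]
  have h01 := hoff 0 1
  have h10 := hoff 1 0
  simp only [hconj] at h10
  have hN : ∀ k i l : Fin 2, 0 ≤ ∑ p, onSq (fderiv ℝ (hessEntry u k i) z (uvec l p)) :=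
    fun k i l => Finset.sum_nonneg fun p _ => onSq_nonneg _
  have n000 := hN 0 0 0
  have n111 := hN 1 1 1
  have n001 := hN 0 0 1
  have n110 := hN 1 1 0
  simp only [Fin.sum_univ_two, Finset.sum_add_distrib, ← Finset.sum_div, hconj]
  generalize oRe (hessEntry u 0 0 z) = a at *
  generalize oRe (hessEntry u 1 1 z) = b at *
  generalize ∑ p, onSq (fderiv ℝ (hessEntry u 0 0) z (uvec 0 p)) = A at *
  generalize ∑ p, onSq (fderiv ℝ (hessEntry u 1 1) z (uvec 1 p)) = B at *
  generalize ∑ p, onSq (fderiv ℝ (hessEntry u 0 0) z (uvec 1 p)) = A' at *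
  generalize ∑ p, onSq (fderiv ℝ (hessEntry u 1 1) z (uvec 0 p)) = B' at *
  generalize ∑ p, onSq (fderiv ℝ (hessEntry u 0 1) z (uvec 0 p)) = C at *
  generalize ∑ p, onSq (fderiv ℝ (hessEntry u 0 1) z (uvec 1 p)) = C' at *
  have e1 : 0 ≤ A / (a * a) := by positivity
  have e2 : 0 ≤ B / (b * b) := by positivity
  have e3 : 0 ≤ A' / (a * a) := by positivity
  have e4 : 0 ≤ B' / (b * b) := by positivity
  have e5 : B' / (a * b) ≤ 8 * (C' / (a * b)) := by
    rw [← mul_div_assoc]; gcongr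
  have e6 : A' / (a * b) ≤ 8 * (C / (a * b)) := by
    rw [← mul_div_assoc]; gcongr
  simp only [mul_comm b a, add_div]
  linarith
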